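/- arXiv:2506.03965 — 2 statements merged into one kernel-verified Lean document; each statement's English description precedes it below -/
import Mathlib

section
/- Let f : ℝⁿ → ℝ, c ∈ (0,1), t > 0, τ > 0, μ_min > 0, μ_max > 0, η_max ∈ [0,1), ε ∈ (0,1), σ† > 0. Fix x ∈ ℝⁿ, a vector s ∈ ℝⁿ and ŝ ∈ ℝ^ℓ such that: (a) the Armijo condition f(x + t s) ≤ f(x) + c t sᵀ ∇f(x) holds, (b) sᵀ ∇f(x) ≤ −μ_min ‖ŝ‖², (c) ‖∇f(x)‖ ≤ ((σ† + μ_max)/((1 − η_max)√(1 − ε))) ‖ŝ‖, and (d) ‖∇f(x)‖ > τ. Then f(x) − f(x + t s) ≥ h(τ, t), where h(τ, t) = c t μ_min (1 − η_max)² (1 − ε) τ² / (σ† + μ_max)². -/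
open Gradient RealInnerProductSpace

theorem mul_le_sub_of_armijo {R X : Type*} [CommRing R] [LinearOrder R] [IsStrictOrderedRing R]
    {f : X → R} {x y : X} {a slope d : R} (ha : 0 ≤ a)
    (armijo : f y ≤ f x + a * slope) (descent : slope ≤ -d) : a * d ≤ f x - f y := by
  have slope_bound : a * slope ≤ a * -d := mul_le_mul_of_nonneg_left descent ha
  linarith

/-- At `k = 0` this reads `0 ≤ r ^ 2`, by the convention `a / 0 = 0`. -/
theorem sq_div_sq_le_sq_of_le_mul {K : Type*} [Field K] [LinearOrder K] [IsStrictOrderedRing K]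
    {a k r : K} (ha : 0 ≤ a) (h : a ≤ k * r) : a ^ 2 / k ^ 2 ≤ r ^ 2 := by
  refine div_le_of_le_mul₀ (sq_nonneg k) (sq_nonneg r) ?_
  calc
    a ^ 2 ≤ (k * r) ^ 2 := pow_le_pow_left₀ ha h 2
    _ = r ^ 2 * k ^ 2 := by ring

theorem sq_div_sq_div_mul_sqrt (a b c : ℝ) {d : ℝ} (hd : 0 ≤ d) :
    a ^ 2 / (b / (c * √d)) ^ 2 = c ^ 2 * d * a ^ 2 / b ^ 2 := by
  rw [div_pow, mul_pow, Real.sq_sqrt hd, div_div_eq_mul_div, mul_comm (a ^ 2)]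

theorem true_successful_decrease_general {E F : Type*} [NormedAddCommGroup E]
    [InnerProductSpace ℝ E] [CompleteSpace E] [SeminormedAddCommGroup F]
    {f : E → ℝ} {c t τ μ κ : ℝ} {x s : E} {shat : F}
    (hc : 0 ≤ c) (ht : 0 ≤ t) (hτ : 0 ≤ τ) (hμ : 0 ≤ μ)
    (armijo : f (x + t • s) ≤ f x + c * t * ⟪s, ∇ f x⟫)
    (descent : ⟪s, ∇ f x⟫ ≤ -μ * ‖shat‖ ^ 2)
    (gradient_le : ‖∇ f x‖ ≤ κ * ‖shat‖) (lt_gradient : τ < ‖∇ f x‖) :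
    c * t * μ * (τ ^ 2 / κ ^ 2) ≤ f x - f (x + t • s) := by
  have step_bound : τ ^ 2 / κ ^ 2 ≤ ‖shat‖ ^ 2 :=
    sq_div_sq_le_sq_of_le_mul hτ (lt_gradient.le.trans gradient_le)
  calc
    c * t * μ * (τ ^ 2 / κ ^ 2) ≤ c * t * μ * ‖shat‖ ^ 2 := by gcongr
    _ = c * t * (μ * ‖shat‖ ^ 2) := mul_assoc _ _ _
    _ ≤ f x - f (x + t • s) :=
      mul_le_sub_of_armijo (mul_nonneg hc ht) armijo (descent.trans_eq (neg_mul _ _))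

/-- Guaranteed decrease at a true, successful iteration before the hitting time:
under the Armijo condition (a), the descent property (b), the gradient-step bound (c),
and `‖∇f(x)‖ > τ` (d), the decrease `f(x) - f(x + t s)` is at least
`h(τ,t) = c t μ_min (1-η_max)² (1-ε) τ² / (σ† + μ_max)²`. -/
theorem true_successful_decrease {n ℓ : ℕ}
    (f : EuclideanSpace ℝ (Fin n) → ℝ)
    (c t τ μmin μmax ηmax ε σdag : ℝ)
    (hc : c ∈ Set.Ioo (0 : ℝ) 1) (ht : 0 < t) (hτ : 0 < τ)
    (hμmin : 0 < μmin) (hμmax : 0 < μmax)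
    (hηmax : 0 ≤ ηmax) (hηmax1 : ηmax < 1)
    (hε : ε ∈ Set.Ioo (0 : ℝ) 1) (hσ : 0 < σdag)
    (x s : EuclideanSpace ℝ (Fin n)) (shat : EuclideanSpace ℝ (Fin ℓ))
    (hdiff : DifferentiableAt ℝ f x)
    (ha : f (x + t • s) ≤ f x + c * t * ⟪s, ∇ f x⟫)
    (hb : ⟪s, ∇ f x⟫ ≤ -μmin * ‖shat‖ ^ 2)
    (hcc : ‖∇ f x‖ ≤ (σdag + μmax) / ((1 - ηmax) * Real.sqrt (1 - ε)) * ‖shat‖)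
    (hd : ‖∇ f x‖ > τ) :
    f x - f (x + t • s) ≥
      c * t * μmin * (1 - ηmax) ^ 2 * (1 - ε) * τ ^ 2 / (σdag + μmax) ^ 2 := by
  have decrease := true_successful_decrease_general hc.1.le ht.le hτ.le hμmin.le ha hb hcc hd
  rw [sq_div_sq_div_mul_sqrt _ _ _ (sub_nonneg.mpr hε.2.le)] at decrease
  simpa only [ge_iff_le, mul_div_assoc, mul_assoc] using decrease
end

section
/- Let B_ζ ⊆ ℝⁿ be a closed ball, F : ℝⁿ → ℝ^m continuously differentiable with Jacobian J, f(x) = ½‖F(x)‖², ∇f = Jᵀ F L-Lipschitz, Ω* = {z : ∇f(z) = 0}. Assume on B_ζ: ‖J(x) − J(y)‖ ≤ L₀‖x − y‖, ‖J(x)‖ ≤ J_max, an error bound ω dist(x, Ω*) ≤ ‖∇f(x)‖ with ω > 0, and ‖J(x)ᵀ F(z)‖ ≤ σ ‖x − z‖^{1+β} for every x ∈ B_ζ and z ∈ B_ζ ∩ Ω*, where σ > 0, β ∈ [0,1]. Let x, x + s ∈ B_ζ with ‖s‖ ≤ c₁ dist(x, Ω*), ∇f(x) ≠ 0, and set θ*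 = ‖∇f(x) + J(x)ᵀ J(x) s‖ / ‖∇f(x)‖. Suppose also that dist(x, Ω*) is attained at some z ∈ B_ζ ∩ Ω* and x + s stays within distance allowing z as comparison point. Then ω · dist(x + s, Ω*) ≤ L₃ dist(x, Ω*)^{1+β} + L₄ dist(x, Ω*)² + θ* L dist(x, Ω*), where L₃ = σ(1 + (1 + c₁)^{1+β}) and L₄ = (L₀ J_max / 2) c₁² + L₀ J_max (1 + c₁)(2 + c₁). -/
open Gradient ContinuousLinearMap

/-!
Write `J` for the Jacobian of `F`. The gradient of `f = ½‖F‖²` is `∇f = Jᵀ F`. Comparing the data at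
`y = x + s` with those at `x` and at a stationary point `z` splits it as

  `∇f(y) = (∇f(x) + J(x)ᵀ J(x) s) + J(x)ᵀ (F(y) - F(x) - J(x) s) + (J(y) - J(x))ᵀ (F(y) - F(z))
    + (J(y)ᵀ F(z) - J(x)ᵀ F(z))`.

The first term is the Gauss–Newton residual, of norm `θ* ‖∇f(x)‖ ≤ θ* L ‖x - z‖`; the second and
third are quadratically small because `J` is Lipschitz and bounded; the last one is controlled by
the residual condition at `x` and `y`. The error bound turns the resulting estimate of `‖∇f(y)‖`
into one of the distance from `y` to the stationary set.
-/

section Taylor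

variable {E G : Type*} [NormedAddCommGroup E] [NormedSpace ℝ E]
  [NormedAddCommGroup G] [NormedSpace ℝ G]

theorem norm_image_sub_sub_hasFDerivWithinAt_le_of_convex {B : Set E} (hB : Convex ℝ B)
    {F : E → G} {J : E → E →L[ℝ] G} (hF : ∀ w ∈ B, HasFDerivWithinAt F (J w) B w)
    {x y : E} (hx : x ∈ B) (hy : y ∈ B) {K : ℝ} (hJ : ∀ w ∈ B, ‖J w - J x‖ ≤ K * ‖w - x‖) :
    ‖F y - F x - J x (y - x)‖ ≤ K / 2 * ‖y - x‖ ^ 2 := by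
  set v := y - x with hv
  have segment_mem : Set.MapsTo (fun t : ℝ => x + t • v) (Set.Icc 0 1) B := fun t ht =>
    hB.add_smul_sub_mem hx hy ht
  have hasDeriv_remainder : ∀ t ∈ Set.Icc (0 : ℝ) 1,
      HasDerivWithinAt (fun t : ℝ => F (x + t • v) - F x - t • J x v)
        ((J (x + t • v) - J x) v) (Set.Icc 0 1) t := by
    intro t ht
    have hsegment : HasDerivWithinAt (fun t : ℝ => x + t • v) v (Set.Icc 0 1) t := by
      simpa using ((hasDerivWithinAt_id t _).smul_const v).const_add x
    have hlinear : HasDerivWithinAt (fun t : ℝ => t • J x v) (J x v) (Set.Icc 0 1) t := by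
      simpa using (hasDerivWithinAt_id t _).smul_const (J x v)
    exact (((hF _ (segment_mem ht)).comp_hasDerivWithinAt t hsegment segment_mem).sub_const
      (F x)).sub hlinear
  have hasDeriv_bound (t : ℝ) :
      HasDerivAt (fun t : ℝ => K / 2 * ‖v‖ ^ 2 * t ^ 2) (K * (t * ‖v‖) * ‖v‖) t :=
    ((hasDerivAt_pow 2 t).const_mul (K / 2 * ‖v‖ ^ 2)).congr_deriv (by push_cast; ring)
  have norm_deriv_le : ∀ t ∈ Set.Ico (0 : ℝ) 1,
      ‖(J (x + t • v) - J x) v‖ ≤ K * (t * ‖v‖) * ‖v‖ := by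
    intro t ht
    have hJt := hJ _ (segment_mem (Set.Ico_subset_Icc_self ht))
    rw [add_sub_cancel_left, norm_smul, Real.norm_of_nonneg ht.1] at hJt
    exact ContinuousLinearMap.le_of_opNorm_le _ hJt v
  have norm_remainder_le := image_norm_le_of_norm_deriv_right_le_deriv_boundary
    (fun t ht => (hasDeriv_remainder t ht).continuousWithinAt)
    (fun t ht => (hasDeriv_remainder t (Set.Ico_subset_Icc_self ht)).mono_of_mem_nhdsWithin
      (Icc_mem_nhdsGE_of_mem ht))
    (by simp) hasDeriv_bound norm_deriv_le (Set.right_mem_Icc.2 zero_le_one)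
  simpa only [one_smul, one_pow, mul_one, hv, add_sub_cancel] using norm_remainder_le

end Taylor

theorem norm_sub_le_one_add_mul {E : Type*} [SeminormedAddCommGroup E] {x y z : E} {c : ℝ}
    (h : ‖y - x‖ ≤ c * ‖x - z‖) : ‖y - z‖ ≤ (1 + c) * ‖x - z‖ := by
  linarith [norm_sub_le_norm_sub_add_norm_sub y x z]

/-- The nonlinear least-squares objective `f = ½‖F‖²` of a residual map `F`. -/
noncomputable def leastSquares {E G : Type*} [Norm G] (F : E → G) : E → ℝ :=
  fun y => (1 / 2) * ‖F y‖ ^ 2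

/-- The set `Ω*` of stationary points of `f`. Mathlib's gradient is `0` where `f` is not
differentiable, so all such points belong to it. -/
def stationarySet {E : Type*} [NormedAddCommGroup E] [InnerProductSpace ℝ E] [CompleteSpace E]
    (f : E → ℝ) : Set E := {z | ∇ f z = 0}

section LeastSquares

variable {E G : Type*} [NormedAddCommGroup E] [InnerProductSpace ℝ E] [CompleteSpace E]
  [NormedAddCommGroup G] [InnerProductSpace ℝ G] [CompleteSpace G]

theorem gradient_leastSquares {F : E → G} {F' : E →L[ℝ] G} {y : E}
    (hF : HasFDerivAt F F' y) : ∇ (leastSquares F) y = adjoint F' (F y) := by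
  refine HasGradientAt.gradient (hasGradientAt_iff_hasFDerivAt.2 ?_)
  refine (hF.norm_sq.const_mul (1 / 2 : ℝ)).congr_fderiv (ContinuousLinearMap.ext fun v => ?_)
  simp [adjoint_inner_left]

theorem norm_adjoint_apply_le_of_le {A : E →L[ℝ] G} {v : G} {a b : ℝ} (hA : ‖A‖ ≤ a)
    (hv : ‖v‖ ≤ b) : ‖adjoint A v‖ ≤ a * b :=
  (adjoint A).le_of_opNorm_le_of_le ((adjoint.norm_map A).trans_le hA) hv

theorem adjoint_apply_eq_gaussNewton_add (A A' : E →L[ℝ] G) (s : E) (u u' w : G) :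
    adjoint A' u' = (adjoint A u + adjoint A (A s)) + adjoint A (u' - u - A s)
      + adjoint (A' - A) (u' - w) + (adjoint A' w - adjoint A w) := by
  simp only [map_sub, sub_apply]
  abel

variable {B : Set E} {F : E → G} {J : E → E →L[ℝ] G} {x y z : E} {L₀ Jmax : ℝ}

theorem norm_adjoint_image_le_gaussNewton_add (hB : Convex ℝ B)
    (hF : ∀ w ∈ B, HasFDerivWithinAt F (J w) B w)
    (hJLip : ∀ w ∈ B, ‖J w - J x‖ ≤ L₀ * ‖w - x‖) (hJb : ∀ w ∈ B, ‖J w‖ ≤ Jmax)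
    (hx : x ∈ B) (hy : y ∈ B) (hz : z ∈ B) :
    ‖adjoint (J y) (F y)‖ ≤ ‖adjoint (J x) (F x) + adjoint (J x) (J x (y - x))‖
      + L₀ * Jmax * (‖y - x‖ ^ 2 / 2 + ‖y - x‖ * ‖y - z‖)
      + (‖adjoint (J y) (F z)‖ + ‖adjoint (J x) (F z)‖) := by
  have taylor_term : ‖adjoint (J x) (F y - F x - J x (y - x))‖
      ≤ Jmax * (L₀ / 2 * ‖y - x‖ ^ 2) :=
    norm_adjoint_apply_le_of_le (hJb x hx)
      (norm_image_sub_sub_hasFDerivWithinAt_le_of_convex hB hF hx hy hJLip)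
  have jacobian_term : ‖adjoint (J y - J x) (F y - F z)‖
      ≤ L₀ * ‖y - x‖ * (Jmax * ‖y - z‖) :=
    norm_adjoint_apply_le_of_le (hJLip y hy)
      (hB.norm_image_sub_le_of_norm_hasFDerivWithin_le hF hJb hz hy)
  rw [adjoint_apply_eq_gaussNewton_add (J x) (J y) (y - x) (F x) (F y) (F z)]
  calc
    _ ≤ ‖adjoint (J x) (F x) + adjoint (J x) (J x (y - x))‖
        + ‖adjoint (J x) (F y - F x - J x (y - x))‖ + ‖adjoint (J y - J x) (F y - F z)‖
        + ‖adjoint (J y) (F z) - adjoint (J x) (F z)‖ := norm_add₄_le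
    _ ≤ ‖adjoint (J x) (F x) + adjoint (J x) (J x (y - x))‖
        + Jmax * (L₀ / 2 * ‖y - x‖ ^ 2) + L₀ * ‖y - x‖ * (Jmax * ‖y - z‖)
        + (‖adjoint (J y) (F z)‖ + ‖adjoint (J x) (F z)‖) := by
      gcongr
      exact norm_sub_le _ _
    _ = _ := by ring

theorem norm_adjoint_image_le_gaussNewton_add_of_step_le (hB : Convex ℝ B)
    (hF : ∀ w ∈ B, HasFDerivWithinAt F (J w) B w)
    (hJLip : ∀ w ∈ B, ‖J w - J x‖ ≤ L₀ * ‖w - x‖) (hJb : ∀ w ∈ B, ‖J w‖ ≤ Jmax)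
    (hx : x ∈ B) (hy : y ∈ B) (hz : z ∈ B) (hxz : x ≠ z) {c σ p : ℝ} (hp : 0 ≤ p)
    (hstep : ‖y - x‖ ≤ c * ‖x - z‖)
    (hres : ∀ w ∈ B, ‖adjoint (J w) (F z)‖ ≤ σ * ‖w - z‖ ^ p) :
    ‖adjoint (J y) (F y)‖ ≤ ‖adjoint (J x) (F x) + adjoint (J x) (J x (y - x))‖
      + L₀ * Jmax * (c ^ 2 / 2 + (1 + c) * (2 + c)) * ‖x - z‖ ^ 2
      + σ * (1 + (1 + c) ^ p) * ‖x - z‖ ^ p := by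
  have dist_pos : 0 < ‖x - z‖ := norm_sub_pos_iff.2 hxz
  have c_nonneg : 0 ≤ c := nonneg_of_mul_nonneg_left ((norm_nonneg _).trans hstep) dist_pos
  have L₀_nonneg : 0 ≤ L₀ := nonneg_of_mul_nonneg_left
    ((norm_nonneg _).trans (hJLip z hz)) (norm_sub_pos_iff.2 hxz.symm)
  have Jmax_nonneg : 0 ≤ Jmax := (norm_nonneg _).trans (hJb x hx)
  have σ_nonneg : 0 ≤ σ := nonneg_of_mul_nonneg_left
    ((norm_nonneg _).trans (hres x hx)) (Real.rpow_pos_of_pos dist_pos p)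
  have hyz : ‖y - z‖ ≤ (1 + c) * ‖x - z‖ := norm_sub_le_one_add_mul hstep
  calc
    _ ≤ ‖adjoint (J x) (F x) + adjoint (J x) (J x (y - x))‖
        + L₀ * Jmax * (‖y - x‖ ^ 2 / 2 + ‖y - x‖ * ‖y - z‖)
        + (‖adjoint (J y) (F z)‖ + ‖adjoint (J x) (F z)‖) :=
      norm_adjoint_image_le_gaussNewton_add hB hF hJLip hJb hx hy hz
    _ ≤ ‖adjoint (J x) (F x) + adjoint (J x) (J x (y - x))‖
        + L₀ * Jmax * ((c * ‖x - z‖) ^ 2 / 2 + (2 + c) * ‖x - z‖ * ((1 + c) * ‖x - z‖))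
        + (σ * ((1 + c) * ‖x - z‖) ^ p + σ * ‖x - z‖ ^ p) := by
      gcongr
      -- The step bound `c * ‖x - z‖` is weakened here to produce the factor `2 + c₁` of `L₄`.
      · linarith
      · exact (hres y hy).trans (by gcongr)
      · exact hres x hx
    _ = _ := by
      rw [Real.mul_rpow (by positivity) dist_pos.le]
      ring

theorem dist_decrease_one_step_general (hB : Convex ℝ B) (hF : ∀ w ∈ B, HasFDerivAt F (J w) w)
    {L ω σ β c₁ θstar : ℝ}
    (hLip : ∀ v ∈ B, ∀ w ∈ B,
      ‖∇ (leastSquares F) v - ∇ (leastSquares F) w‖ ≤ L * ‖v - w‖)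
    {Ωstar : Set E} (hΩ : Ωstar ⊆ stationarySet (leastSquares F))
    (hJLip : ∀ v ∈ B, ∀ w ∈ B, ‖J v - J w‖ ≤ L₀ * ‖v - w‖) (hJb : ∀ w ∈ B, ‖J w‖ ≤ Jmax)
    (heb : ∀ w ∈ B, ω * Metric.infDist w Ωstar ≤ ‖∇ (leastSquares F) w‖)
    (hβ : -1 ≤ β)
    (hres : ∀ w ∈ B, ∀ z ∈ B ∩ Ωstar, ‖adjoint (J w) (F z)‖ ≤ σ * ‖w - z‖ ^ (1 + β))
    {s : E} (hx : x ∈ B) (hxs : x + s ∈ B) (hs : ‖s‖ ≤ c₁ * Metric.infDist x Ωstar)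
    (hgx : ∇ (leastSquares F) x ≠ 0)
    (hθ : θstar = ‖∇ (leastSquares F) x + adjoint (J x) (J x s)‖ / ‖∇ (leastSquares F) x‖)
    (hz : z ∈ B ∩ Ωstar) (hzdist : ‖x - z‖ = Metric.infDist x Ωstar) :
    ω * Metric.infDist (x + s) Ωstar ≤
      σ * (1 + (1 + c₁) ^ (1 + β)) * Metric.infDist x Ωstar ^ (1 + β)
      + (L₀ * Jmax / 2 * c₁ ^ 2 + L₀ * Jmax * (1 + c₁) * (2 + c₁)) *
          Metric.infDist x Ωstar ^ 2
      + θstar * L * Metric.infDist x Ωstar := by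
  have grad_z : ∇ (leastSquares F) z = 0 := hΩ hz.2
  have hxz : x ≠ z := fun h => hgx (h ▸ grad_z)
  rw [← hzdist] at hs ⊢
  have grad_x_le : ‖∇ (leastSquares F) x‖ ≤ L * ‖x - z‖ := by
    simpa only [grad_z, sub_zero] using hLip x hx z hz.1
  have gaussNewton_residual_le :
      ‖∇ (leastSquares F) x + adjoint (J x) (J x s)‖ ≤ θstar * (L * ‖x - z‖) := by
    calc
      _ = θstar * ‖∇ (leastSquares F) x‖ := by
        rw [hθ, div_mul_cancel₀ _ (norm_ne_zero_iff.2 hgx)]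
      _ ≤ θstar * (L * ‖x - z‖) :=
        mul_le_mul_of_nonneg_left grad_x_le (hθ ▸ by positivity)
  have grad_le := norm_adjoint_image_le_gaussNewton_add_of_step_le hB
    (fun w hw => (hF w hw).hasFDerivWithinAt) (fun w hw => hJLip w hw x hx) hJb
    hx hxs hz.1 hxz (neg_le_iff_add_nonneg'.1 hβ) (by rwa [add_sub_cancel_left])
    (fun w hw => hres w hw z hz)
  rw [add_sub_cancel_left, ← gradient_leastSquares (hF x hx),
    ← gradient_leastSquares (hF _ hxs)] at grad_le
  linarith [heb _ hxs]

end LeastSquares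

/-- One-step decrease of the distance to the stationary set for the sketched
Levenberg–Marquardt method: under Lipschitz gradient, Lipschitz and bounded Jacobian on
the closed ball `B_ζ`, the error bound `ω dist(x,Ω*) ≤ ‖∇f(x)‖`, the residual condition
`‖J(x)ᵀF(z)‖ ≤ σ‖x-z‖^{1+β}`, a step `s` with `‖s‖ ≤ c₁ dist(x,Ω*)` and relative
Gauss–Newton residual `θ*`, one has
`ω dist(x+s,Ω*) ≤ L₃ dist(x,Ω*)^{1+β} + L₄ dist(x,Ω*)² + θ* L dist(x,Ω*)`
with `L₃ = σ(1+(1+c₁)^{1+β})` and `L₄ = (L₀ J_max/2)c₁² + L₀ J_max (1+c₁)(2+c₁)`. -/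
theorem dist_decrease_one_step {n m : ℕ}
    (x₀ : EuclideanSpace ℝ (Fin n)) (ζ : ℝ) (hζ : 0 < ζ)
    (Bζ : Set (EuclideanSpace ℝ (Fin n))) (hBζ : Bζ = Metric.closedBall x₀ ζ)
    (F : EuclideanSpace ℝ (Fin n) → EuclideanSpace ℝ (Fin m)) (hF : ContDiff ℝ 1 F)
    (f : EuclideanSpace ℝ (Fin n) → ℝ) (hf : f = fun y => (1 / 2) * ‖F y‖ ^ 2)
    (L L₀ Jmax ω σ β c₁ : ℝ)
    (hLip : ∀ x y : EuclideanSpace ℝ (Fin n), ‖∇ f x - ∇ f y‖ ≤ L * ‖x - y‖)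
    (Ωstar : Set (EuclideanSpace ℝ (Fin n))) (hΩ : Ωstar = {z | ∇ f z = 0})
    (hJLip : ∀ x ∈ Bζ, ∀ y ∈ Bζ, ‖fderiv ℝ F x - fderiv ℝ F y‖ ≤ L₀ * ‖x - y‖)
    (hJb : ∀ x ∈ Bζ, ‖fderiv ℝ F x‖ ≤ Jmax)
    (hω : 0 < ω)
    (heb : ∀ x ∈ Bζ, ω * Metric.infDist x Ωstar ≤ ‖∇ f x‖)
    (hσ : 0 < σ) (hβ : β ∈ Set.Icc (0 : ℝ) 1)
    (hres : ∀ x ∈ Bζ, ∀ z ∈ Bζ ∩ Ωstar,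
      ‖adjoint (fderiv ℝ F x) (F z)‖ ≤ σ * ‖x - z‖ ^ (1 + β))
    (x s : EuclideanSpace ℝ (Fin n)) (hx : x ∈ Bζ) (hxs : x + s ∈ Bζ)
    (hs : ‖s‖ ≤ c₁ * Metric.infDist x Ωstar)
    (hgx : ∇ f x ≠ 0)
    (θstar : ℝ)
    (hθ : θstar = ‖∇ f x + adjoint (fderiv ℝ F x) (fderiv ℝ F x s)‖ / ‖∇ f x‖)
    (z : EuclideanSpace ℝ (Fin n)) (hz : z ∈ Bζ ∩ Ωstar)
    (hzdist : ‖x - z‖ = Metric.infDist x Ωstar) :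
    ω * Metric.infDist (x + s) Ωstar ≤
      σ * (1 + (1 + c₁) ^ (1 + β)) * Metric.infDist x Ωstar ^ (1 + β)
      + (L₀ * Jmax / 2 * c₁ ^ 2 + L₀ * Jmax * (1 + c₁) * (2 + c₁)) *
          Metric.infDist x Ωstar ^ 2
      + θstar * L * Metric.infDist x Ωstar := by
  subst hBζ hf hΩ
  exact dist_decrease_one_step_general (convex_closedBall x₀ ζ)
    (fun w _ => (hF.differentiable one_ne_zero w).hasFDerivAt) (fun v _ w _ => hLip v w)
    subset_rfl hJLip hJb heb (by linarith [hβ.1]) hres hx hxs hs hgx hθ hz hzdist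
end
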